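/- Let p and q be open guarded FNM terms with at most one free variable x. Let A and B be process constants defined by A ≐ p{A/x} and B ≐ q{B/x}. If p ~sp q (as open terms, i.e., p{r/x} ~sp q{r/x} for every closed FNM term r), then A ~sp B. (Structure-preserving bisimilarity is a congruence for guarded recursion.) -/

import Mathlib

/-- Actions of FNM: the invisible action τ, input actions `a ∈ L` and
output actions `ā ∈ L̄` (here `α` plays the role of the finite set `L`). -/
inductive Act (α : Type) where
  | tau : Act α
  | inp : α → Act α
  | out : α → Act α
  deriving DecidableEq

/-- (Open) FNM terms: `0`, the variable `x`, action prefixing `mu.t`, strong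
prefixing `a̲.s`, choice `s+s`, constants `C`, parallel `t|t` and
restriction `(νa)p`.  The syntactic categories are carved out below. -/
inductive FNM (α κ : Type) where
  | nil : FNM α κ
  | var : FNM α κ
  | pref : Act α → FNM α κ → FNM α κ
  | spref : α → FNM α κ → FNM α κ
  | sum : FNM α κ → FNM α κ → FNM α κ
  | const : κ → FNM α κ
  | par : FNM α κ → FNM α κ → FNM α κ
  | res : α → FNM α κ → FNM α κ
  deriving DecidableEq

namespace FNM

variable {α κ : Type}

mutual
  /-- Guarded terms: syntactic category `s ::= 0 | mu.t | a̲.s | s+s`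
  (with `t` restriction-free). -/
  def Grd : FNM α κ → Prop
    | .nil => True
    | .var => False
    | .pref _ t => RF t
    | .spref _ s => Grd s
    | .sum s1 s2 => Grd s1 ∧ Grd s2
    | .const _ => False
    | .par _ _ => False
    | .res _ _ => False
  /-- Restriction-free terms: syntactic category `t ::= q | t|t`, where
  `q ::= s | C | x` is the category of sequential terms. -/
  def RF : FNM α κ → Prop
    | .nil => True
    | .var => True
    | .pref _ t => RF t
    | .spref _ s => Grd s
    | .sum s1 s2 => Grd s1 ∧ Grd s2
    | .const _ => True
    | .par t1 t2 => RF t1 ∧ RF t2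
    | .res _ _ => False
end

/-- Sequential terms: `q ::= s | C | x`. -/
def Seq (t : FNM α κ) : Prop :=
  Grd t ∨ (∃ c, t = FNM.const c) ∨ t = FNM.var

/-- General terms: `p ::= t | (νa)p`. -/
def Gen : FNM α κ → Prop
  | .res _ p => Gen p
  | t => RF t

/-- Closed terms: no occurrence of the variable. -/
def VarFree : FNM α κ → Prop
  | .nil => True
  | .var => False
  | .pref _ t => VarFree t
  | .spref _ s => VarFree s
  | .sum s1 s2 => VarFree s1 ∧ VarFree s2
  | .const _ => True
  | .par t1 t2 => VarFree t1 ∧ VarFree t2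
  | .res _ p => VarFree p

/-- Substitution `p{r/x}` of the term `r` for every occurrence of the
variable `x` in `p` (constants are dealt with via the environment). -/
def subst (r : FNM α κ) : FNM α κ → FNM α κ
  | .nil => .nil
  | .var => r
  | .pref mu t => .pref mu (subst r t)
  | .spref a s => .spref a (subst r s)
  | .sum s1 s2 => .sum (subst r s1) (subst r s2)
  | .const c => .const c
  | .par t1 t2 => .par (subst r t1) (subst r t2)
  | .res a p => .res a (subst r p)

/-- `mu` uses the name `a`. -/
def _root_.Act.uses (a : α) : Act α → Prop
  | .tau => False
  | .inp b => b = a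
  | .out b => b = a

/-- `a` occurs free in a term (through an environment `env` giving the body
of each process constant). -/
inductive FreeIn (env : κ → FNM α κ) (a : α) : FNM α κ → Prop where
  | pref_act {mu : Act α} {t : FNM α κ} : mu.uses a → FreeIn env a (.pref mu t)
  | pref_cont {mu : Act α} {t : FNM α κ} : FreeIn env a t → FreeIn env a (.pref mu t)
  | spref_act {s : FNM α κ} : FreeIn env a (.spref a s)
  | spref_cont {b : α} {s : FNM α κ} : FreeIn env a s → FreeIn env a (.spref b s)
  | sum_l {s1 s2 : FNM α κ} : FreeIn env a s1 → FreeIn env a (.sum s1 s2)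
  | sum_r {s1 s2 : FNM α κ} : FreeIn env a s2 → FreeIn env a (.sum s1 s2)
  | par_l {t1 t2 : FNM α κ} : FreeIn env a t1 → FreeIn env a (.par t1 t2)
  | par_r {t1 t2 : FNM α κ} : FreeIn env a t2 → FreeIn env a (.par t1 t2)
  | res {b : α} {p : FNM α κ} : a ≠ b → FreeIn env a p → FreeIn env a (.res b p)
  | const {c : κ} : FreeIn env a (env c) → FreeIn env a (.const c)

/-- `a` occurs bound (by a restriction) in a term. -/
inductive BoundIn (env : κ → FNM α κ) (a : α) : FNM α κ → Prop where
  | res_here {p : FNM α κ} : BoundIn env a (.res a p)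
  | res_in {b : α} {p : FNM α κ} : BoundIn env a p → BoundIn env a (.res b p)
  | pref {mu : Act α} {t : FNM α κ} : BoundIn env a t → BoundIn env a (.pref mu t)
  | spref {b : α} {s : FNM α κ} : BoundIn env a s → BoundIn env a (.spref b s)
  | sum_l {s1 s2 : FNM α κ} : BoundIn env a s1 → BoundIn env a (.sum s1 s2)
  | sum_r {s1 s2 : FNM α κ} : BoundIn env a s2 → BoundIn env a (.sum s1 s2)
  | par_l {t1 t2 : FNM α κ} : BoundIn env a t1 → BoundIn env a (.par t1 t2)
  | par_r {t1 t2 : FNM α κ} : BoundIn env a t2 → BoundIn env a (.par t1 t2)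
  | const {c : κ} : BoundIn env a (env c) → BoundIn env a (.const c)

end FNM

/-- A place of the net `N_FNM`: a sequential (extended) term, rendered as a
pure sequential term together with the record `ρ : α → Bool` of which names
have been replaced by their restricted counterparts (`ρ a = true` represents
the substitution `{a'/a}`). -/
abbrev Place (α κ : Type) := FNM α κ × (α → Bool)

namespace FNM

variable {α κ : Type} [DecidableEq α] [DecidableEq κ] [Fintype α]

/-- The decomposition function `dec`, mapping (extended) terms to markings:
`dec(0) = θ`, `dec(p|q) = dec(p) ⊕ dec(q)`, `dec((νa)p) = dec(p){a'/a}`, and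
a sequential term other than `0` is mapped to a single place. -/
def dec (ρ : α → Bool) : FNM α κ → Multiset (Place α κ)
  | .nil => 0
  | .par t1 t2 => dec ρ t1 + dec ρ t2
  | .res a p => dec (Function.update ρ a true) p
  | t => {(t, ρ)}

end FNM

/-- Extended visible actions: inputs and outputs, possibly restricted
(`inp a true` represents `a'`, `out a false` represents `ā`, etc.). -/
inductive XAct (α : Type) where
  | inp : α → Bool → XAct α
  | out : α → Bool → XAct α

/-- Labels of net transitions: `τ` is the empty sequence, and otherwise a
sequence of extended actions. -/
abbrev Lbl (α : Type) := List (XAct α)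

/-- An extended action carries no restricted name. -/
def XAct.unres {α : Type} : XAct α → Prop
  | .inp _ r => r = false
  | .out _ r => r = false

/-- The label contributed by prefix `mu` under the restriction record `ρ`. -/
def actL {α : Type} (ρ : α → Bool) : Act α → Lbl α
  | .tau => []
  | .inp a => [XAct.inp a (ρ a)]
  | .out a => [XAct.out a (ρ a)]

/-- The synchronization relation `Sync(σ1, σ2, σ)`: `Sync(α, ᾱ, τ)`,
`Sync(aσ, ā, σ)` and `Sync(ā, aσ, σ)` for `σ ≠ ε` (also on restricted
actions). -/
inductive Sync {α : Type} : Lbl α → Lbl α → Lbl α → Prop where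
  | inout (a : α) (r : Bool) : Sync [XAct.inp a r] [XAct.out a r] []
  | outin (a : α) (r : Bool) : Sync [XAct.out a r] [XAct.inp a r] []
  | seqL (a : α) (r : Bool) (σ : Lbl α) :
      σ ≠ [] → Sync (XAct.inp a r :: σ) [XAct.out a r] σ
  | seqR (a : α) (r : Bool) (σ : Lbl α) :
      σ ≠ [] → Sync [XAct.out a r] (XAct.inp a r :: σ) σ

namespace FNM

variable {α κ : Type} [DecidableEq α] [DecidableEq κ] [Fintype α]

/-- A marking is admissible if for no name `a` both `a` and its restricted
counterpart `a'` occur free in it. -/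
def Adm (env : κ → FNM α κ) (m : Multiset (Place α κ)) : Prop :=
  ∀ a : α, ¬ ((∃ p ∈ m, FreeIn env a p.1 ∧ p.2 a = false) ∧
              (∃ p ∈ m, FreeIn env a p.1 ∧ p.2 a = true))

/-- The net transitions of `N_FNM`, generated by the rules (pref), (sum₁),
(sum₂), (cons), (s-pref) and (s-com). -/
inductive Tr (env : κ → FNM α κ) :
    Multiset (Place α κ) → Lbl α → Multiset (Place α κ) → Prop where
  | pref (ρ : α → Bool) (mu : Act α) (t : FNM α κ) :
      Tr env {(FNM.pref mu t, ρ)} (actL ρ mu) (dec ρ t)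
  | sum1 (ρ : α → Bool) (s1 s2 : FNM α κ) (σ : Lbl α) (m : Multiset (Place α κ)) :
      Tr env (dec ρ s1) σ m → Tr env {(FNM.sum s1 s2, ρ)} σ m
  | sum2 (ρ : α → Bool) (s1 s2 : FNM α κ) (σ : Lbl α) (m : Multiset (Place α κ)) :
      Tr env (dec ρ s2) σ m → Tr env {(FNM.sum s1 s2, ρ)} σ m
  | cons (ρ : α → Bool) (c : κ) (σ : Lbl α) (m : Multiset (Place α κ)) :
      Tr env (dec ρ (env c)) σ m → Tr env {(FNM.const c, ρ)} σ m
  | spref (ρ : α → Bool) (a : α) (s : FNM α κ) (σ : Lbl α) (m : Multiset (Place α κ)) :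
      Tr env (dec ρ s) σ m →
      Tr env {(FNM.spref a s, ρ)} (XAct.inp a (ρ a) :: σ) m
  | scom (m1 m2 m1' m2' : Multiset (Place α κ)) (σ1 σ2 σ : Lbl α) :
      Tr env m1 σ1 m1' → Tr env m2 σ2 m2' →
      Adm env (m1 + m2) → Sync σ1 σ2 σ →
      Tr env (m1 + m2) σ (m1' + m2')

/-- Tritions of the net `N_FNM`: only those whose label contains no
restricted action are kept. -/
def NetTr (env : κ → FNM α κ) (m : Multiset (Place α κ)) (σ : Lbl α)
    (m' : Multiset (Place α κ)) : Prop :=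
  Tr env m σ m' ∧ ∀ x ∈ σ, x.unres

/-- First projection of a linking. -/
def pi1 (l : Multiset (Place α κ × Place α κ)) : Multiset (Place α κ) :=
  l.map Prod.fst

/-- Second projection of a linking. -/
def pi2 (l : Multiset (Place α κ × Place α κ)) : Multiset (Place α κ) :=
  l.map Prod.snd

/-- Structure-preserving bisimulation on the net `N_FNM`. -/
def IsSPB (env : κ → FNM α κ) (R : Set (Multiset (Place α κ × Place α κ))) : Prop :=
  ∀ l ∈ R, ∀ c ≤ l,
    (∀ σ m1, NetTr env (pi1 c) σ m1 →
      ∃ m2 cb, NetTr env (pi2 c) σ m2 ∧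
        pi1 cb = m1 ∧ pi2 cb = m2 ∧ l - c + cb ∈ R) ∧
    (∀ σ m2, NetTr env (pi2 c) σ m2 →
      ∃ m1 cb, NetTr env (pi1 c) σ m1 ∧
        pi1 cb = m1 ∧ pi2 cb = m2 ∧ l - c + cb ∈ R)

/-- `p ~sp q`: some structure-preserving bisimulation contains a linking
projecting on `dec(p)` and `dec(q)`. -/
def SPEq (env : κ → FNM α κ) (p q : FNM α κ) : Prop :=
  ∃ R, IsSPB env R ∧ ∃ l ∈ R,
    pi1 l = dec (fun _ => false) p ∧ pi2 l = dec (fun _ => false) q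

end FNM

namespace FNM

section Aux

variable {α κ : Type} [DecidableEq α] [DecidableEq κ] [Fintype α]

theorem rel_comp_aux {β γ δ : Type} {r : β → γ → Prop} {s : γ → δ → Prop} {a : Multiset β}
    {b : Multiset γ} (h1 : Multiset.Rel r a b) :
    ∀ {c : Multiset δ}, Multiset.Rel s b c →
      Multiset.Rel (fun x z => ∃ y, r x y ∧ s y z) a c := by
  induction h1 with
  | zero =>
    intro c h2
    rw [Multiset.rel_zero_left] at h2
    subst h2
    exact Multiset.Rel.zero
  | cons hxy _ ih =>
    intro c h2
    rw [Multiset.rel_cons_left] at h2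
    obtain ⟨z, c', hz, hc, rfl⟩ := h2
    exact Multiset.Rel.cons ⟨_, hxy, hz⟩ (ih hc)

theorem rel_link {β γ : Type} {r : β → γ → Prop} {a : Multiset β} {b : Multiset γ}
    (h1 : Multiset.Rel r a b) :
    ∃ l : Multiset (β × γ), l.map Prod.fst = a ∧ l.map Prod.snd = b ∧ ∀ x ∈ l, r x.1 x.2 := by
  induction h1 with
  | zero => exact ⟨0, by simp⟩
  | @cons x y _ _ hxy _ ih =>
    obtain ⟨l, h1, h2, h3⟩ := ih
    refine ⟨(x, y) ::ₘ l, by simp [h1], by simp [h2], ?_⟩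
    intro z hz
    rcases Multiset.mem_cons.1 hz with rfl | hz
    · exact hxy
    · exact h3 z hz

theorem link_rel {β γ : Type} {r : β → γ → Prop} (l : Multiset (β × γ))
    (h : ∀ x ∈ l, r x.1 x.2) : Multiset.Rel r (l.map Prod.fst) (l.map Prod.snd) := by
  induction l using Multiset.induction_on with
  | empty => exact Multiset.Rel.zero
  | cons x l ih =>
    simp only [Multiset.map_cons]
    exact Multiset.Rel.cons (h x (Multiset.mem_cons_self _ _))
      (ih fun y hy => h y (Multiset.mem_cons_of_mem hy))

theorem add_single {β : Type} {m1 m2 : Multiset β} {x : β} (h : m1 + m2 = {x}) :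
    m1 = 0 ∨ m2 = 0 := by
  have := congrArg Multiset.card h
  simp only [Multiset.card_add, Multiset.card_singleton] at this
  rcases Nat.eq_zero_or_pos (Multiset.card m1) with h1 | h1
  · exact Or.inl (Multiset.card_eq_zero.1 h1)
  · exact Or.inr (Multiset.card_eq_zero.1 (by omega))

abbrev rho0 : α → Bool := fun _ => false

def GoodP (x : Place α κ) : Prop := RF x.1 ∧ x.2 = rho0

theorem grd_rf {t : FNM α κ} (h : Grd t) : RF t := by
  cases t <;> simp_all [Grd, RF]

theorem dec_good {t : FNM α κ} (h : RF t) : ∀ x ∈ dec rho0 t, GoodP x := by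
  induction t with
  | par t1 t2 ih1 ih2 =>
    simp only [RF] at h
    intro x hx
    rcases Multiset.mem_add.1 hx with hx | hx
    · exact ih1 h.1 x hx
    · exact ih2 h.2 x hx
  | res a p _ => simp [RF] at h
  | nil => intro x hx; simp [dec] at hx
  | _ => intro x hx; simp only [dec, Multiset.mem_singleton] at hx; subst hx; exact ⟨h, rfl⟩

theorem tr_zero_aux {env : κ → FNM α κ} {m m' : Multiset (Place α κ)} {σ : Lbl α}
    (h : Tr env m σ m') : m ≠ 0 := by
  induction h with
  | scom m1 m2 m1' m2' σ1 σ2 σ h1 h2 hadm hs ih1 ih2 =>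
    intro h0
    exact ih1 (by simpa using (add_eq_zero.1 h0).1)
  | _ => simp

theorem tr_good {env : κ → FNM α κ} (henv : ∀ c, Grd (env c)) {m m' : Multiset (Place α κ)}
    {σ : Lbl α} (h : Tr env m σ m') :
    (∀ x ∈ m, GoodP x) → (∀ x ∈ m', GoodP x) ∧ ∀ a ∈ σ, a.unres := by
  induction h with
  | pref ρ mu t =>
    intro hg
    obtain ⟨h1, h2⟩ := hg _ (Multiset.mem_singleton_self _)
    simp only at h2 h1
    subst h2
    simp only [RF] at h1
    refine ⟨dec_good h1, ?_⟩
    cases mu <;> simp [actL, XAct.unres, rho0]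
  | sum1 ρ s1 s2 σ m _ ih =>
    intro hg
    obtain ⟨h1, h2⟩ := hg _ (Multiset.mem_singleton_self _)
    simp only at h2 h1
    subst h2
    simp only [RF] at h1
    exact ih (dec_good (grd_rf h1.1))
  | sum2 ρ s1 s2 σ m _ ih =>
    intro hg
    obtain ⟨h1, h2⟩ := hg _ (Multiset.mem_singleton_self _)
    simp only at h2 h1
    subst h2
    simp only [RF] at h1
    exact ih (dec_good (grd_rf h1.2))
  | cons ρ c σ m _ ih =>
    intro hg
    obtain ⟨h1, h2⟩ := hg _ (Multiset.mem_singleton_self _)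
    simp only at h2
    subst h2
    exact ih (dec_good (grd_rf (henv c)))
  | spref ρ a s σ m _ ih =>
    intro hg
    obtain ⟨h1, h2⟩ := hg _ (Multiset.mem_singleton_self _)
    simp only at h2 h1
    subst h2
    simp only [RF] at h1
    obtain ⟨h3, h4⟩ := ih (dec_good (grd_rf h1))
    refine ⟨h3, ?_⟩
    intro b hb
    rcases List.mem_cons.1 hb with rfl | hb
    · simp [XAct.unres, rho0]
    · exact h4 b hb
  | scom m1 m2 m1' m2' σ1 σ2 σ h1 h2 hadm hs ih1 ih2 =>
    intro hg
    obtain ⟨a1, b1⟩ := ih1 fun x hx => hg x (Multiset.mem_add.2 (Or.inl hx))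
    obtain ⟨a2, b2⟩ := ih2 fun x hx => hg x (Multiset.mem_add.2 (Or.inr hx))
    refine ⟨?_, ?_⟩
    · intro x hx
      rcases Multiset.mem_add.1 hx with hx | hx
      · exact a1 x hx
      · exact a2 x hx
    · cases hs with
      | inout => simp
      | outin => simp
      | seqL => exact fun x hx => b1 x (List.mem_cons_of_mem _ hx)
      | seqR => exact fun x hx => b2 x (List.mem_cons_of_mem _ hx)

theorem good_adm {env : κ → FNM α κ} {m : Multiset (Place α κ)} (h : ∀ x ∈ m, GoodP x) :
    Adm env m := by
  rintro a ⟨_, x, hx, _, h2⟩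
  rw [(h x hx).2] at h2
  simp [rho0] at h2

/-- One-place simulation. -/
def Sim (env : κ → FNM α κ) (E F : Place α κ → Place α κ → Prop) : Prop :=
  ∀ x y, E x y → ∀ σ m, Tr env {x} σ m → ∃ n, Tr env {y} σ n ∧ Multiset.Rel F m n

structure TB (env : κ → FNM α κ) (E : Place α κ → Place α κ → Prop) : Prop where
  good : ∀ x y, E x y → GoodP x ∧ GoodP y
  fwd : Sim env E E
  bwd : Sim env (flip E) (flip E)

def TEq (env : κ → FNM α κ) (x y : Place α κ) : Prop := ∃ E, TB env E ∧ E x y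

theorem TB.symm {env : κ → FNM α κ} {E : Place α κ → Place α κ → Prop} (h : TB env E) :
    TB env (flip E) :=
  ⟨fun x y hxy => (h.good y x hxy).symm, h.bwd, h.fwd⟩

theorem TEq.symm {env : κ → FNM α κ} {x y : Place α κ} (h : TEq env x y) : TEq env y x := by
  obtain ⟨E, hE, hxy⟩ := h
  exact ⟨flip E, hE.symm, hxy⟩

theorem sim_comp {env : κ → FNM α κ} {E F E' F' : Place α κ → Place α κ → Prop}
    (h1 : Sim env E E') (h2 : Sim env F F') :
    Sim env (fun x z => ∃ y, E x y ∧ F y z) (fun x z => ∃ y, E' x y ∧ F' y z) := by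
  rintro x z ⟨y, hxy, hyz⟩ σ m hm
  obtain ⟨n, hn, hr⟩ := h1 x y hxy σ m hm
  obtain ⟨k, hk, hr'⟩ := h2 y z hyz σ n hn
  exact ⟨k, hk, rel_comp_aux hr hr'⟩

theorem Sim.mono {env : κ → FNM α κ} {E F E' F' : Place α κ → Place α κ → Prop}
    (h : Sim env E F) (hE : ∀ x y, E' x y → E x y) (hF : ∀ x y, F x y → F' x y) :
    Sim env E' F' := by
  intro x y hxy σ m hm
  obtain ⟨n, hn, hr⟩ := h x y (hE x y hxy) σ m hm
  exact ⟨n, hn, hr.mono fun a _ b _ => hF a b⟩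

theorem TEq.trans {env : κ → FNM α κ} {x y z : Place α κ} (h1 : TEq env x y)
    (h2 : TEq env y z) : TEq env x z := by
  obtain ⟨E, hE, hxy⟩ := h1
  obtain ⟨F, hF, hyz⟩ := h2
  refine ⟨fun x z => ∃ y, E x y ∧ F y z, ⟨?_, sim_comp hE.fwd hF.fwd, ?_⟩, ⟨y, hxy, hyz⟩⟩
  · rintro a c ⟨b, h1, h2⟩
    exact ⟨(hE.good _ _ h1).1, (hF.good _ _ h2).2⟩
  · refine (sim_comp hF.bwd hE.bwd).mono ?_ ?_
    · rintro a c ⟨b, h1, h2⟩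
      exact ⟨b, h2, h1⟩
    · rintro a c ⟨b, h1, h2⟩
      exact ⟨b, h2, h1⟩

theorem TEq.sim {env : κ → FNM α κ} : Sim env (TEq env) (TEq env) := by
  rintro x y ⟨E, hE, hxy⟩ σ m hm
  obtain ⟨n, hn, hr⟩ := hE.fwd x y hxy σ m hm
  exact ⟨n, hn, hr.mono fun a _ b _ h => ⟨E, hE, h⟩⟩

theorem TEq.good {env : κ → FNM α κ} {x y : Place α κ} (h : TEq env x y) :
    GoodP x ∧ GoodP y := by
  obtain ⟨E, hE, hxy⟩ := h
  exact hE.good x y hxy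

theorem TEq.rfl {env : κ → FNM α κ} (henv : ∀ c, Grd (env c)) {x : Place α κ} (h : GoodP x) :
    TEq env x x := by
  have key : ∀ m : Multiset (Place α κ), (∀ x ∈ m, GoodP x) →
      Multiset.Rel (fun a b : Place α κ => a = b ∧ GoodP a) m m := fun m hm =>
    Multiset.rel_refl_of_refl_on fun a ha => ⟨Eq.refl a, hm a ha⟩
  refine ⟨fun a b => a = b ∧ GoodP a, ⟨?_, ?_, ?_⟩, Eq.refl x, h⟩
  · rintro a b ⟨rfl, h⟩
    exact ⟨h, h⟩
  · rintro a b ⟨rfl, h⟩ σ m hm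
    exact ⟨m, hm, key m (tr_good henv hm (by simpa using h)).1⟩
  · rintro a b ⟨rfl, h⟩ σ m hm
    exact ⟨m, hm, (key m (tr_good henv hm (by simpa using h)).1).mono
      fun a _ b _ h => by obtain ⟨rfl, h⟩ := h; exact ⟨Eq.refl _, h⟩⟩

/-- Multi-place transitions are matched by a one-place simulation. -/
theorem sim_multi {env : κ → FNM α κ} {E : Place α κ → Place α κ → Prop}
    (hg : ∀ x y, E x y → GoodP y) (hE : Sim env E E) {m m' : Multiset (Place α κ)}
    {σ : Lbl α} (h : Tr env m σ m') :
    ∀ n, Multiset.Rel E m n → ∃ n', Tr env n σ n' ∧ Multiset.Rel E m' n' := by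
  have single : ∀ (x : Place α κ) σ m', Tr env {x} σ m' → ∀ n, Multiset.Rel E {x} n →
      ∃ n', Tr env n σ n' ∧ Multiset.Rel E m' n' := by
    intro x σ m' h n hn
    rw [← Multiset.cons_zero, Multiset.rel_cons_left] at hn
    obtain ⟨y, n', hy, hn', rfl⟩ := hn
    rw [Multiset.rel_zero_left] at hn'
    subst hn'
    exact hE x y hy σ m' h
  induction h with
  | pref ρ mu t => exact single _ _ _ (Tr.pref ρ mu t)
  | sum1 ρ s1 s2 σ m h _ => exact single _ _ _ (Tr.sum1 ρ s1 s2 σ m h)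
  | sum2 ρ s1 s2 σ m h _ => exact single _ _ _ (Tr.sum2 ρ s1 s2 σ m h)
  | cons ρ c σ m h _ => exact single _ _ _ (Tr.cons ρ c σ m h)
  | spref ρ a s σ m h _ => exact single _ _ _ (Tr.spref ρ a s σ m h)
  | scom m1 m2 m1' m2' σ1 σ2 σ h1 h2 hadm hs ih1 ih2 =>
    intro n hn
    have hgood : ∀ y ∈ n, GoodP y := by
      intro y hy
      obtain ⟨x, _, hxy⟩ := Multiset.exists_mem_of_rel_of_mem (Multiset.rel_flip.2 hn) hy
      exact hg x y hxy
    rw [Multiset.rel_add_left] at hn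
    obtain ⟨n1, n2, hr1, hr2, rfl⟩ := hn
    obtain ⟨n1', t1, r1⟩ := ih1 n1 hr1
    obtain ⟨n2', t2, r2⟩ := ih2 n2 hr2
    exact ⟨n1' + n2', Tr.scom _ _ _ _ _ _ _ t1 t2 (good_adm hgood) hs, r1.add r2⟩

theorem tb_spb {env : κ → FNM α κ} (henv : ∀ c, Grd (env c))
    {E : Place α κ → Place α κ → Prop} (hE : TB env E) :
    IsSPB env {l | ∀ x ∈ l, E x.1 x.2} := by
  intro l hl c hc
  have hcl : ∀ x ∈ c, E x.1 x.2 := fun x hx => hl x (Multiset.mem_of_le hc hx)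
  have hrel := link_rel c hcl
  have hg1 : ∀ x ∈ pi1 c, GoodP x := by
    intro x hx
    obtain ⟨z, hz, rfl⟩ := Multiset.mem_map.1 hx
    exact (hE.good _ _ (hcl z hz)).1
  have hg2 : ∀ x ∈ pi2 c, GoodP x := by
    intro x hx
    obtain ⟨z, hz, rfl⟩ := Multiset.mem_map.1 hx
    exact (hE.good _ _ (hcl z hz)).2
  have fin : ∀ cb : Multiset (Place α κ × Place α κ), (∀ x ∈ cb, E x.1 x.2) →
      ∀ x ∈ l - c + cb, E x.1 x.2 := by
    intro cb hcb x hx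
    rcases Multiset.mem_add.1 hx with hx | hx
    · exact hl x (Multiset.mem_of_le (Multiset.sub_le_self l c) hx)
    · exact hcb x hx
  constructor
  · rintro σ m1 ⟨ht, hu⟩
    obtain ⟨n, hn, hr⟩ := sim_multi (fun x y h => (hE.good x y h).2) hE.fwd ht _ hrel
    obtain ⟨cb, h1, h2, h3⟩ := rel_link hr
    exact ⟨n, cb, ⟨hn, hu⟩, h1, h2, fin cb h3⟩
  · rintro σ m1 ⟨ht, hu⟩
    obtain ⟨n, hn, hr⟩ := sim_multi (fun x y h => (hE.good y x h).1) hE.bwd ht _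
      (Multiset.rel_flip.2 hrel)
    obtain ⟨cb, h1, h2, h3⟩ := rel_link (Multiset.rel_flip.1 hr)
    exact ⟨n, cb, ⟨hn, hu⟩, h1, h2, fin cb h3⟩

theorem spb_tb {env : κ → FNM α κ} (henv : ∀ c, Grd (env c))
    {R : Set (Multiset (Place α κ × Place α κ))} (hR : IsSPB env R) :
    TB env (fun x y => GoodP x ∧ GoodP y ∧ ∃ l ∈ R, (x, y) ∈ l) := by
  have fin : ∀ (l : Multiset (Place α κ × Place α κ)) (x y : Place α κ)
      (cb : Multiset (Place α κ × Place α κ)) σ, GoodP x → GoodP y →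
      Tr env {x} σ (pi1 cb) → Tr env {y} σ (pi2 cb) →
      l - {(x, y)} + cb ∈ R → Multiset.Rel
        (fun x y => GoodP x ∧ GoodP y ∧ ∃ l ∈ R, (x, y) ∈ l) (pi1 cb) (pi2 cb) := by
    intro l x y cb σ hx hy h1 h2 hR'
    apply link_rel
    intro z hz
    refine ⟨(tr_good henv h1 (by simpa using hx)).1 _ (Multiset.mem_map_of_mem _ hz),
      (tr_good henv h2 (by simpa using hy)).1 _ (Multiset.mem_map_of_mem _ hz), _, hR',
      Multiset.mem_add.2 (Or.inr hz)⟩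
  refine ⟨fun x y h => ⟨h.1, h.2.1⟩, ?_, ?_⟩
  · rintro x y ⟨hx, hy, l, hl, hxy⟩ σ m ht
    obtain ⟨m2, cb, h1, h2, h3, h4⟩ := (hR l hl {(x, y)} (by simpa using hxy)).1 σ m
      ⟨by simpa [pi1] using ht, (tr_good henv ht (by simpa using hx)).2⟩
    have h1' : Tr env {y} σ m2 := by simpa [pi2] using h1.1
    subst h2 h3
    exact ⟨_, h1', fin l x y cb σ hx hy ht h1' h4⟩
  · rintro y x ⟨hx, hy, l, hl, hxy⟩ σ m ht
    obtain ⟨m2, cb, h1, h2, h3, h4⟩ := (hR l hl {(x, y)} (by simpa using hxy)).2 σ m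
      ⟨by simpa [pi2] using ht, (tr_good henv ht (by simpa using hy)).2⟩
    have h1' : Tr env {x} σ m2 := by simpa [pi1] using h1.1
    subst h2 h3
    exact ⟨_, h1', Multiset.rel_flip.2 (fin l x y cb σ hx hy h1' ht h4)⟩

theorem speq_rel {env : κ → FNM α κ} (henv : ∀ c, Grd (env c)) {p q : FNM α κ}
    (hp : RF p) (hq : RF q) (h : SPEq env p q) :
    Multiset.Rel (TEq env) (dec rho0 p) (dec rho0 q) := by
  obtain ⟨R, hR, l, hl, h1, h2⟩ := h
  have g1 := dec_good hp
  have g2 := dec_good hq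
  change pi1 l = dec rho0 p at h1
  change pi2 l = dec rho0 q at h2
  rw [← h1] at g1 ⊢
  rw [← h2] at g2 ⊢
  apply link_rel
  intro x hx
  exact ⟨_, spb_tb henv hR, g1 _ (Multiset.mem_map_of_mem _ hx),
    g2 _ (Multiset.mem_map_of_mem _ hx), l, hl, hx⟩

theorem subst_grd_rf (c : κ) (t : FNM α κ) :
    (Grd t → Grd (subst (FNM.const c) t)) ∧ (RF t → RF (subst (FNM.const c) t)) := by
  induction t <;> simp_all [Grd, RF, subst]

/-- Contexts instantiated by two constants. -/
def CtxR (A B : κ) (x y : Place α κ) : Prop :=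
  (GoodP x ∧ x = y) ∨
  ∃ t, Seq t ∧ t ≠ FNM.nil ∧ x = (subst (FNM.const A) t, rho0) ∧
    y = (subst (FNM.const B) t, rho0)

theorem seq_rf {t : FNM α κ} (h : Seq t) : RF t := by
  rcases h with h | ⟨c, rfl⟩ | rfl
  · exact grd_rf h
  · simp [RF]
  · simp [RF]

theorem CtxR.good {A B : κ} {x y : Place α κ} (h : CtxR A B x y) : GoodP x ∧ GoodP y := by
  rcases h with ⟨h, rfl⟩ | ⟨t, h, _, rfl, rfl⟩
  · exact ⟨h, h⟩
  · exact ⟨⟨(subst_grd_rf A t).2 (seq_rf h), rfl⟩, ⟨(subst_grd_rf B t).2 (seq_rf h), rfl⟩⟩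

theorem CtxR.symm {A B : κ} {x y : Place α κ} (h : CtxR A B x y) : CtxR B A y x := by
  rcases h with ⟨h, rfl⟩ | ⟨t, h, h', rfl, rfl⟩
  · exact Or.inl ⟨h, rfl⟩
  · exact Or.inr ⟨t, h, h', rfl, rfl⟩

theorem dec_subst_seq (c : κ) {t : FNM α κ} (h : Seq t) (h0 : t ≠ FNM.nil) :
    dec rho0 (subst (FNM.const c) t) = {(subst (FNM.const c) t, rho0)} := by
  cases t <;> simp_all [Seq, Grd, subst, dec]

theorem ctx_dec (A B : κ) {t : FNM α κ} (h : RF t) :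
    Multiset.Rel (CtxR A B) (dec rho0 (subst (FNM.const A) t))
      (dec rho0 (subst (FNM.const B) t)) := by
  have key : ∀ t : FNM α κ, Seq t → t ≠ FNM.nil →
      Multiset.Rel (CtxR A B) (dec rho0 (subst (FNM.const A) t))
        (dec rho0 (subst (FNM.const B) t)) := by
    intro t h h0
    rw [dec_subst_seq A h h0, dec_subst_seq B h h0]
    exact Multiset.Rel.cons (Or.inr ⟨t, h, h0, rfl, rfl⟩) Multiset.Rel.zero
  induction t with
  | par t1 t2 ih1 ih2 =>
    simp only [RF] at h
    exact (ih1 h.1).add (ih2 h.2)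
  | res a p _ => simp [RF] at h
  | nil => exact Multiset.Rel.zero
  | var => exact key _ (Or.inr (Or.inr rfl)) (by simp)
  | const c => exact key _ (Or.inr (Or.inl ⟨c, rfl⟩)) (by simp)
  | pref mu t _ => exact key _ (Or.inl (by simpa [Grd, RF] using h)) (by simp)
  | spref mu t _ => exact key _ (Or.inl (by simpa [Grd, RF] using h)) (by simp)
  | sum s t _ _ => exact key _ (Or.inl (by simpa [Grd, RF] using h)) (by simp)

def CtxT (env : κ → FNM α κ) (A B : κ) (x z : Place α κ) : Prop :=
  ∃ y, CtxR A B x y ∧ TEq env y z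

theorem ctx_step {env : κ → FNM α κ} (henv : ∀ c, Grd (env c)) {p q : FNM α κ}
    (hp : Grd p) (A B : κ)
    (hA : env A = subst (FNM.const A) p) (hB : env B = subst (FNM.const B) q)
    (hpq : Multiset.Rel (TEq env) (dec rho0 (subst (FNM.const B) p))
      (dec rho0 (subst (FNM.const B) q)))
    {m m' : Multiset (Place α κ)} {σ : Lbl α} (h : Tr env m σ m') :
    ∀ t, Seq t → m = dec rho0 (subst (FNM.const A) t) →
      ∃ n, Tr env (dec rho0 (subst (FNM.const B) t)) σ n ∧
        Multiset.Rel (CtxT env A B) m' n := by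
  have lift : ∀ m n : Multiset (Place α κ), Multiset.Rel (CtxR A B) m n →
      Multiset.Rel (CtxT env A B) m n := fun m n h =>
    h.mono fun a _ b _ hab => ⟨b, hab, TEq.rfl henv hab.good.2⟩
  induction h with
  | pref ρ mu t0 =>
    intro t ht he
    cases t with
    | pref mu' t' =>
      simp only [subst, dec, Multiset.singleton_inj, Prod.mk.injEq, FNM.pref.injEq] at he
      obtain ⟨⟨rfl, rfl⟩, rfl⟩ := he
      refine ⟨_, Tr.pref _ _ _, lift _ _ (ctx_dec A B ?_)⟩
      simpa [Seq, Grd] using ht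
    | _ => simp_all [subst, dec, Seq, Grd]
  | sum1 ρ s1 s2 σ m h ih =>
    intro t ht he
    cases t with
    | sum t1 t2 =>
      simp only [subst, dec, Multiset.singleton_inj, Prod.mk.injEq, FNM.sum.injEq] at he
      obtain ⟨⟨rfl, rfl⟩, rfl⟩ := he
      have ht' : Grd t1 ∧ Grd t2 := by simpa [Seq, Grd] using ht
      obtain ⟨n, hn, hr⟩ := ih t1 (Or.inl ht'.1) rfl
      exact ⟨n, Tr.sum1 _ _ _ _ _ hn, hr⟩
    | _ => simp_all [subst, dec, Seq, Grd]
  | sum2 ρ s1 s2 σ m h ih =>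
    intro t ht he
    cases t with
    | sum t1 t2 =>
      simp only [subst, dec, Multiset.singleton_inj, Prod.mk.injEq, FNM.sum.injEq] at he
      obtain ⟨⟨rfl, rfl⟩, rfl⟩ := he
      have ht' : Grd t1 ∧ Grd t2 := by simpa [Seq, Grd] using ht
      obtain ⟨n, hn, hr⟩ := ih t2 (Or.inl ht'.2) rfl
      exact ⟨n, Tr.sum2 _ _ _ _ _ hn, hr⟩
    | _ => simp_all [subst, dec, Seq, Grd]
  | spref ρ a s σ m h ih =>
    intro t ht he
    cases t with
    | spref b t' =>
      simp only [subst, dec, Multiset.singleton_inj, Prod.mk.injEq, FNM.spref.injEq] at he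
      obtain ⟨⟨rfl, rfl⟩, rfl⟩ := he
      have ht' : Grd t' := by simpa [Seq, Grd] using ht
      obtain ⟨n, hn, hr⟩ := ih t' (Or.inl ht') rfl
      exact ⟨n, Tr.spref _ _ _ _ _ hn, hr⟩
    | _ => simp_all [subst, dec, Seq, Grd]
  | cons ρ c σ m h ih =>
    intro t ht he
    cases t with
    | const c' =>
      simp only [subst, dec, Multiset.singleton_inj, Prod.mk.injEq, FNM.const.injEq] at he
      obtain ⟨rfl, rfl⟩ := he
      refine ⟨m, Tr.cons _ _ _ _ h, lift _ _ (Multiset.rel_refl_of_refl_on fun x hx => ?_)⟩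
      exact Or.inl ⟨(tr_good henv h (dec_good (grd_rf (henv c)))).1 x hx, rfl⟩
    | var =>
      simp only [subst, dec, Multiset.singleton_inj, Prod.mk.injEq, FNM.const.injEq] at he
      obtain ⟨rfl, rfl⟩ := he
      obtain ⟨n, hn, hr⟩ := ih p (Or.inl hp) (by rw [hA])
      obtain ⟨k, hk, hr'⟩ := sim_multi (fun x y h => h.good.2) TEq.sim hn _ hpq
      refine ⟨k, Tr.cons _ _ _ _ (by rw [hB]; exact hk), (rel_comp_aux hr hr').mono ?_⟩
      rintro x _ z _ ⟨y, ⟨w, h1, h2⟩, h3⟩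
      exact ⟨w, h1, h2.trans h3⟩
    | _ => simp_all [subst, dec, Seq, Grd]
  | scom m1 m2 m1' m2' σ1 σ2 σ h1 h2 hadm hs ih1 ih2 =>
    intro t ht he
    exfalso
    by_cases h0 : t = FNM.nil
    · subst h0
      exact tr_zero_aux h1 (add_eq_zero.1 (he.trans rfl)).1
    · rw [dec_subst_seq A ht h0] at he
      rcases add_single he with h | h
      · exact tr_zero_aux h1 h
      · exact tr_zero_aux h2 h

theorem ctx_sim {env : κ → FNM α κ} (henv : ∀ c, Grd (env c)) {p q : FNM α κ}
    (hp : Grd p) (A B : κ)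
    (hA : env A = subst (FNM.const A) p) (hB : env B = subst (FNM.const B) q)
    (hpq : Multiset.Rel (TEq env) (dec rho0 (subst (FNM.const B) p))
      (dec rho0 (subst (FNM.const B) q))) :
    Sim env (CtxR A B) (CtxT env A B) := by
  intro x y hxy σ m hm
  rcases hxy with ⟨h, rfl⟩ | ⟨t, h, h0, rfl, rfl⟩
  · refine ⟨m, hm, Multiset.rel_refl_of_refl_on fun z hz => ?_⟩
    have hz' := (tr_good henv hm (by simpa using h)).1 z hz
    exact ⟨z, Or.inl ⟨hz', rfl⟩, TEq.rfl henv hz'⟩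
  · rw [← dec_subst_seq A h h0] at hm
    rw [← dec_subst_seq B h h0]
    exact ctx_step henv hp A B hA hB hpq hm t h rfl

end Aux

end FNM

open FNM in
/-- structure-preserving bisimilarity is a congruence for
guarded recursion: if `p` and `q` are open guarded FNM terms (with at most
the one variable `x`), the constants `A, B` are defined by `A ≐ p{A/x}` and
`B ≐ q{B/x}`, and `p{r/x} ~sp q{r/x}` for every closed FNM sequential term
`r`, then `A ~sp B`. -/
theorem speq_congr_recursion {α κ : Type} [DecidableEq α] [DecidableEq κ]
    [Fintype α] [Finite κ]
    (env : κ → FNM α κ) (henv : ∀ c, Grd (env c) ∧ VarFree (env c))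
    (p q : FNM α κ) (hp : Grd p) (hq : Grd q)
    (cA cB : κ)
    (hA : env cA = subst (FNM.const cA) p)
    (hB : env cB = subst (FNM.const cB) q)
    (h : ∀ r : FNM α κ, Seq r → VarFree r →
      SPEq env (subst r p) (subst r q)) :
    SPEq env (FNM.const cA) (FNM.const cB) := by
  have henv' : ∀ c, Grd (env c) := fun c => (henv c).1
  have hr : ∀ c, Multiset.Rel (TEq env) (dec rho0 (subst (FNM.const c) p))
      (dec rho0 (subst (FNM.const c) q)) := fun c =>
    speq_rel henv' (grd_rf ((subst_grd_rf c p).1 hp)) (grd_rf ((subst_grd_rf c q).1 hq))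
      (h (FNM.const c) (Or.inr (Or.inl ⟨c, rfl⟩)) (by simp [VarFree]))
  have hr' : ∀ c, Multiset.Rel (TEq env) (dec rho0 (subst (FNM.const c) q))
      (dec rho0 (subst (FNM.const c) p)) := fun c =>
    (Multiset.rel_flip.2 (hr c)).mono fun a _ b _ hab => TEq.symm hab
  have s1 := ctx_sim henv' hp cA cB hA hB (hr cB)
  have s2 := ctx_sim henv' hq cB cA hB hA (hr' cA)
  have hTB : TB env (fun x w => ∃ y, TEq env x y ∧ ∃ z, CtxR cA cB y z ∧ TEq env z w) := by
    refine ⟨?_, ?_, ?_⟩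
    · rintro x w ⟨y, h1, z, _, h2⟩
      exact ⟨h1.good.1, h2.good.2⟩
    · refine (sim_comp TEq.sim (sim_comp s1 TEq.sim)).mono (fun _ _ h => h) ?_
      rintro x w ⟨y, h1, z, ⟨u, h2, h3⟩, h4⟩
      exact ⟨y, h1, u, h2, h3.trans h4⟩
    · refine (sim_comp TEq.sim (sim_comp s2 TEq.sim)).mono ?_ ?_
      · rintro w x ⟨y, h1, z, h2, h3⟩
        exact ⟨z, h3.symm, y, h2.symm, h1.symm⟩
      · rintro w x ⟨y, h1, z, ⟨u, h2, h3⟩, h4⟩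
        exact ⟨u, (h3.trans h4).symm, y, h2.symm, h1.symm⟩
  have hg : ∀ c : κ, GoodP ((FNM.const c, rho0) : Place α κ) := fun c => ⟨by simp [RF], rfl⟩
  refine ⟨_, tb_spb henv' hTB, {((FNM.const cA, rho0), (FNM.const cB, rho0))}, ?_, ?_, ?_⟩
  · intro x hx
    rw [Multiset.mem_singleton] at hx
    subst hx
    exact ⟨_, TEq.rfl henv' (hg cA), _,
      Or.inr ⟨FNM.var, Or.inr (Or.inr rfl), by simp, rfl, rfl⟩, TEq.rfl henv' (hg cB)⟩
  · simp [pi1, dec]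
  · simp [pi2, dec]
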